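/- arXiv:1909.10766 — 2 statements merged into one kernel-verified Lean document; each statement's English description precedes it below -/
import Mathlib

section
/- For all real numbers α, β with 0 ≤ β ≤ α ≤ 1 and β < 1, we have arccos β − arccos α ≤ (π/2)·(α − β)/√(1 − β). -/
/-!
On `[0, 1]` the function `arccos` is concave, being a decreasing inverse of the concave function
`cos`. As `arccos 1 = 0`, its graph lies above the chord from `(β, arccos β)` to `(1, 0)`, so that
`arccos β - arccos α ≤ arccos β * (α - β) / (1 - β)`. It remains to see that
`arccos β ≤ π / 2 * √(1 - β)`: putting `θ = arccos β ∈ [0, π / 2]`, this says that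
`(1 - cos θ) / θ ^ 2 = 2 * (sin (θ / 2) / θ) ^ 2` is at least its value at `π / 2`, and
`sin t / t` is decreasing on `(0, π]` because `sin` is concave there.
-/

open Real Set

theorem chord_le_of_concaveOn {𝕜 : Type*} [Field 𝕜] [LinearOrder 𝕜] [IsStrictOrderedRing 𝕜]
    {s : Set 𝕜} {f : 𝕜 → 𝕜} (hf : ConcaveOn 𝕜 s f) {x y z : 𝕜}
    (hx : x ∈ s) (hz : z ∈ s) (hxy : x ≤ y) (hyz : y ≤ z) :
    (z - y) * f x + (y - x) * f z ≤ (z - x) * f y := by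
  rcases hxy.eq_or_lt with rfl | hxy
  · simp
  rcases hyz.eq_or_lt with rfl | hyz
  · simp
  have h := hf.neg.secant_mono_aux1 hx hz hxy hyz
  simp only [Pi.neg_apply] at h
  linarith

theorem concaveOn_arccos_Icc_zero_one : ConcaveOn ℝ (Icc 0 1) arccos := by
  have arccos_mem {x : ℝ} (hx : 0 ≤ x) : arccos x ∈ Icc (-(π / 2)) (π / 2) :=
    ⟨by linarith [arccos_nonneg x, pi_pos], arccos_le_pi_div_two.2 hx⟩
  refine ⟨convex_Icc 0 1, fun x hx y hy a b ha hb hab ↦ ?_⟩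
  simp only [smul_eq_mul]
  have mean_mem : a * arccos x + b * arccos y ∈ Icc 0 π :=
    convex_Icc 0 π ⟨arccos_nonneg x, arccos_le_pi x⟩ ⟨arccos_nonneg y, arccos_le_pi y⟩ ha hb hab
  have mean_le_cos : a * x + b * y ≤ cos (a * arccos x + b * arccos y) := by
    simpa only [smul_eq_mul, cos_arccos (by linarith [hx.1] : -1 ≤ x) hx.2,
      cos_arccos (by linarith [hy.1] : -1 ≤ y) hy.2] using
      strictConcaveOn_cos_Icc.concaveOn.2 (arccos_mem hx.1) (arccos_mem hy.1) ha hb hab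
  calc a * arccos x + b * arccos y
      = arccos (cos (a * arccos x + b * arccos y)) := (arccos_cos mean_mem.1 mean_mem.2).symm
    _ ≤ arccos (a * x + b * y) := arccos_le_arccos mean_le_cos

theorem arccos_sub_arccos_le_arccos_mul_div {x y : ℝ} (hx : 0 ≤ x) (hxy : x ≤ y) (hy : y ≤ 1)
    (hx1 : x < 1) : arccos x - arccos y ≤ arccos x * (y - x) / (1 - x) := by
  have chord : (1 - y) * arccos x ≤ (1 - x) * arccos y := by
    simpa using chord_le_of_concaveOn concaveOn_arccos_Icc_zero_one ⟨hx, hx1.le⟩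
      (right_mem_Icc.2 zero_le_one) hxy hy
  rw [le_div_iff₀ (sub_pos.2 hx1)]
  linarith

theorem mul_sin_le_mul_sin {x y : ℝ} (hx : 0 ≤ x) (hxy : x ≤ y) (hy : y ≤ π) :
    x * sin y ≤ y * sin x := by
  simpa using chord_le_of_concaveOn strictConcaveOn_sin_Icc.concaveOn
    (left_mem_Icc.2 pi_pos.le) ⟨hx.trans hxy, hy⟩ hx hxy

theorem sq_mul_one_sub_cos_le {x y : ℝ} (hx : 0 ≤ x) (hxy : x ≤ y) (hy : y ≤ 2 * π) :
    x ^ 2 * (1 - cos y) ≤ y ^ 2 * (1 - cos x) := by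
  have one_sub_cos (t : ℝ) : 1 - cos t = 2 * sin (t / 2) ^ 2 := by
    rw [sin_sq_eq_half_sub, mul_div_cancel₀ t two_ne_zero]
    ring
  have sin_half_nonneg : 0 ≤ sin (y / 2) :=
    sin_nonneg_of_nonneg_of_le_pi (by linarith) (by linarith)
  have half_angle : x / 2 * sin (y / 2) ≤ y / 2 * sin (x / 2) :=
    mul_sin_le_mul_sin (by linarith) (by linarith) (by linarith)
  calc x ^ 2 * (1 - cos y) = 8 * (x / 2 * sin (y / 2)) ^ 2 := by rw [one_sub_cos]; ring
    _ ≤ 8 * (y / 2 * sin (x / 2)) ^ 2 := by gcongr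
    _ = y ^ 2 * (1 - cos x) := by rw [one_sub_cos]; ring

theorem arccos_le_pi_div_two_mul_sqrt_one_sub {x : ℝ} (hx : 0 ≤ x) (hx1 : x ≤ 1) :
    arccos x ≤ π / 2 * √(1 - x) := by
  have arccos_sq_le : arccos x ^ 2 ≤ (π / 2) ^ 2 * (1 - x) := by
    simpa [cos_arccos (by linarith : -1 ≤ x) hx1] using
      sq_mul_one_sub_cos_le (arccos_nonneg x) (arccos_le_pi_div_two.2 hx) (by linarith [pi_pos])
  calc arccos x ≤ √((π / 2) ^ 2 * (1 - x)) := le_sqrt_of_sq_le arccos_sq_le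
    _ = π / 2 * √(1 - x) := by rw [sqrt_mul (sq_nonneg _), sqrt_sq pi_div_two_pos.le]

/-- for `0 ≤ β ≤ α ≤ 1` with `β < 1`,
`arccos β − arccos α ≤ (π/2)·(α − β)/√(1 − β)`. -/
theorem arccos_diff_bound (α β : ℝ) (hβ0 : 0 ≤ β) (hβα : β ≤ α) (hα1 : α ≤ 1)
    (hβ1 : β < 1) :
    Real.arccos β - Real.arccos α ≤
      Real.pi / 2 * (α - β) / Real.sqrt (1 - β) := by
  calc arccos β - arccos α ≤ arccos β * (α - β) / (1 - β) :=
        arccos_sub_arccos_le_arccos_mul_div hβ0 hβα hα1 hβ1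
    _ ≤ π / 2 * √(1 - β) * (α - β) / (1 - β) := by
        gcongr
        exact arccos_le_pi_div_two_mul_sqrt_one_sub hβ0 hβ1.le
    _ = π / 2 * (α - β) * (√(1 - β) / (1 - β)) := by ring
    _ = π / 2 * (α - β) / √(1 - β) := by rw [sqrt_div_self, ← div_eq_mul_inv]
end

section
/- For every real number β ∈ [0, 1], we have arccos β ≤ (π/2)·√(1 − β). -/
/-!
The function `θ ↦ θ / sin (θ / 2)` is monotone on `(0, 2π)`, since `sin` is concave on `[0, π]` and
vanishes at `0`. As `√(1 - cos θ) = √2 * sin (θ / 2)`, setting `θ = arccos β` shows that the ratio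
`arccos β / √(1 - β)` decreases in `β`; at `β = 0` it equals `π / 2`.
-/

open Real Set

theorem mul_le_mul_of_concaveOn {𝕜 : Type*} [Field 𝕜] [LinearOrder 𝕜] [IsStrictOrderedRing 𝕜]
    {s : Set 𝕜} {f : 𝕜 → 𝕜} {x y : 𝕜} (hf : ConcaveOn 𝕜 s f) (h0s : 0 ∈ s) (hf0 : 0 ≤ f 0)
    (hys : y ∈ s) (hx : 0 ≤ x) (hxy : x ≤ y) : x * f y ≤ y * f x := by
  obtain rfl | hy := (hx.trans hxy).eq_or_lt
  · simp [hxy.antisymm hx]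
  have weight_nonneg : 0 ≤ 1 - x / y := sub_nonneg.2 (div_le_one_of_le₀ hxy hy.le)
  have chord : x / y * f y ≤ f x :=
    calc x / y * f y ≤ (1 - x / y) * f 0 + x / y * f y :=
          le_add_of_nonneg_left (mul_nonneg weight_nonneg hf0)
      _ ≤ f ((1 - x / y) * 0 + x / y * y) :=
          hf.2 h0s hys weight_nonneg (div_nonneg hx hy.le) (sub_add_cancel _ _)
      _ = f x := by rw [mul_zero, zero_add, div_mul_cancel₀ x hy.ne']
  calc x * f y = y * (x / y * f y) := by rw [← mul_assoc, mul_div_cancel₀ x hy.ne']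
    _ ≤ y * f x := mul_le_mul_of_nonneg_left chord hy.le

theorem sqrt_one_sub_cos_eq {x : ℝ} (hx : 0 ≤ x) (hx' : x ≤ 2 * π) :
    √(1 - cos x) = √2 * sin (x / 2) := by
  rw [sin_half_eq_sqrt hx hx', ← sqrt_mul zero_le_two, mul_div_cancel₀ _ two_ne_zero]

theorem mul_sqrt_one_sub_cos_le {x y : ℝ} (hx : 0 ≤ x) (hxy : x ≤ y) (hy : y ≤ 2 * π) :
    x * √(1 - cos y) ≤ y * √(1 - cos x) := by
  rw [sqrt_one_sub_cos_eq (hx.trans hxy) hy, sqrt_one_sub_cos_eq hx (hxy.trans hy)]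
  have half : x / 2 * sin (y / 2) ≤ y / 2 * sin (x / 2) :=
    mul_sin_le_mul_sin (by linarith) (by linarith) (by linarith)
  calc x * (√2 * sin (y / 2)) = 2 * √2 * (x / 2 * sin (y / 2)) := by ring
    _ ≤ 2 * √2 * (y / 2 * sin (x / 2)) := by gcongr
    _ = y * (√2 * sin (x / 2)) := by ring

theorem arccos_le_general {a β : ℝ} (ha : -1 ≤ a) (haβ : a ≤ β) (hβ1 : β ≤ 1) :
    arccos β * √(1 - a) ≤ arccos a * √(1 - β) := by
  have arccos_a_le : arccos a ≤ 2 * π := by linarith [arccos_le_pi a, pi_pos]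
  simpa only [cos_arccos ha (haβ.trans hβ1), cos_arccos (ha.trans haβ) hβ1] using
    mul_sqrt_one_sub_cos_le (arccos_nonneg β) (arccos_le_arccos haβ) arccos_a_le

/-- for every `β ∈ [0, 1]`, `arccos β ≤ (π/2)·√(1 − β)`. -/
theorem arccos_le (β : ℝ) (hβ0 : 0 ≤ β) (hβ1 : β ≤ 1) :
    Real.arccos β ≤ Real.pi / 2 * Real.sqrt (1 - β) := by
  simpa using arccos_le_general neg_one_lt_zero.le hβ0 hβ1
end
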